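/- Let k ≥ 3 and d ≥ 1 be integers with d ≤ ln k / ln ln k, and let C ≥ 100 be a real number with ln(8eC) ≤ (1 − 1/e)·(ln k)/d. Set Δ = d / (240 e √(C ln k)). Then there exist an integer N with 1 ≤ N ≤ k and points μ^{(P)}_1, …, μ^{(P)}_N, μ^{(Q)}_1, …, μ^{(Q)}_N ∈ ℝ^d such that: (1) the family (μ^{(P)}_i) is Δ-separated and the family (μ^{(Q)}_i) is Δ-separated; (2) for every permutation π of {1,…,N} there exists i with ‖μ^{(P)}_i − μ^{(Q)}_{π(i)}‖₂ > Δ/2; and (3) the uniform Gaussian mixtures P̃ = (1/N)∑_{i=1}^N N(μ^{(P)}_i, I_d) and Q̃ = (1/N)∑_{i=1}^N N(μ^{(Q)}_i, I_d) satisfy d_TV(P̃, Q̃) ≤ 2 k^{−C}. -/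

import Mathlib

open MeasureTheory Real

/-!
Write `y = C log k` and `M = ⌈y⌉`. The two mixtures are chosen with equal moments of all degrees
less than `M` and with means in the ball of radius `R = √y / 20`.

*Equal moments give small total variation.* By Cauchy-Schwarz against the standard Gaussian
density, the `L¹` norm of `∑ ε_i N(a_i, I)` is at most the square root of
`∑ ε_i ε_j exp ⟨a_i, a_j⟩`. Expanding the exponential, the terms of degree less than `M` vanish and
the remainder is at most `4 · 400^{-M} e^{400 R²} ≤ 4 e^{-2y}` (`integral_abs_gauss_sum_le`).

*Constructing the means.* Let `m` be the number of monomials of degree less than `M` in `d`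
variables and `N = m + 1`. The hypothesis on `C` gives `N ≤ (3ey/d)^d ≤ k`, and a volume argument
(`exists_separated_in_ball`) provides `N` points `x_i` of norm at most `√y / 40` with mutual
distances at least `2Δ`. Take the means `x_i ± s_i v` with `‖v‖ = Δ/2` and `|s_i| ≤ 1`; both
families are `Δ`-separated. Equality of the moments says that `N = m + 1` odd curves in `ℝ^m`,
evaluated at the parameters `s_i`, sum to zero. If some `|s_i| = 1`, the corresponding mean
of the first family is at distance at least `Δ` from every mean of the second one, so no matching
is `Δ/2`-close.

*The topological input.* That such parameters exist on the boundary of the cube is a Borsuk-Ulam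
type statement (`exists_zero_sum_odd_curves`). It is proved by hand: for piecewise linear curves in
general position the sum is affine on every grid cell, its zero set in a cell is a segment or empty,
and counting cells and facets modulo 2 with the central symmetry shows that the path of zeros
starting in the central cell reaches the boundary (`exists_boundary_hit`). Approximation and
compactness give the continuous case.
-/

/-! ### Zeros of affine maps on the unit cube -/

section BorsukUlam
variable {I : Type*} [Fintype I]

/-- From a point of the unit cube, moving in a nonzero direction `v`, one leaves the cube through
some facet `{x k = 1}` with `0 < v k` or `{x k = 0}` with `v k < 0`. -/
lemma exists_exit (t v : I → ℝ) (ht : t ∈ Set.Icc (0 : I → ℝ) 1) (hv : v ≠ 0) :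
    ∃ a : ℝ, t + a • v ∈ Set.Icc (0 : I → ℝ) 1 ∧
      ∃ k, (0 < v k ∧ (t + a • v) k = 1) ∨ (v k < 0 ∧ (t + a • v) k = 0) := by
  classical
  obtain ⟨k₀, hk₀⟩ : ∃ k, v k ≠ 0 := by
    by_contra! h
    exact hv (funext h)
  let τ : I → ℝ := fun k => if 0 < v k then (1 - t k) / v k else - t k / v k
  obtain ⟨k, hk, hmin⟩ := Finset.exists_min_image (Finset.univ.filter fun k => v k ≠ 0) τ
    ⟨k₀, by simpa using hk₀⟩
  have hk' : v k ≠ 0 := by simpa using hk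
  have ht0 : ∀ i, 0 ≤ t i := fun i => ht.1 i
  have ht1 : ∀ i, t i ≤ 1 := fun i => ht.2 i
  have hτ0 : 0 ≤ τ k := by
    simp only [τ]
    split_ifs with h
    · exact div_nonneg (by linarith [ht1 k]) h.le
    · exact div_nonneg_of_nonpos (by linarith [ht0 k]) (not_lt.mp h)
  have hb : ∀ i, 0 ≤ t i + τ k * v i ∧ t i + τ k * v i ≤ 1 := by
    intro i
    rcases lt_trichotomy (v i) 0 with h | h | h
    · have h1 : τ k ≤ - t i / v i := by
        have := hmin i (by simpa using h.ne)
        simpa [τ, not_lt.mpr h.le] using this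
      rw [le_div_iff_of_neg h] at h1
      constructor
      · linarith
      · nlinarith [ht1 i]
    · simp [h, ht0 i, ht1 i]
    · have h1 : τ k ≤ (1 - t i) / v i := by
        have := hmin i (by simpa using h.ne')
        simpa [τ, h] using this
      rw [le_div_iff₀ h] at h1
      constructor
      · nlinarith [ht0 i]
      · linarith
  refine ⟨τ k, ⟨fun i => (hb i).1, fun i => (hb i).2⟩, k, ?_⟩
  rcases lt_or_gt_of_ne hk' with h | h
  · right
    refine ⟨h, ?_⟩
    simp [τ, not_lt.mpr h.le, hk']
  · left
    refine ⟨h, ?_⟩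
    simp [τ, h, hk']

section Module
variable {E : Type*} [AddCommGroup E] [Module ℝ E]

/-- The two endpoints of the unit interval; a facet of the unit cube is the set of `t` with
`t k = endpt s` for a pair `(k, s)`. -/
def endpt (s : Bool) : ℝ := if s then 1 else 0

/-- An affine map with non-injective linear part which vanishes somewhere in the cube, but at no
point lying on two facets with distinct coordinate indices, vanishes on exactly two facets: its
zero set there is a segment, and the two facets are those crossed at its ends. -/
lemma card_hit_facets (A : (I → ℝ) →ₗ[ℝ] E) (b : E) (hA : LinearMap.ker A ≠ ⊥)
    (hgen : ∀ t ∈ Set.Icc (0 : I → ℝ) 1, ∀ i j, i ≠ j → ∀ s s', t i = endpt s →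
      t j = endpt s' → A t + b ≠ 0)
    (hhit : ∃ t ∈ Set.Icc (0 : I → ℝ) 1, A t + b = 0)
    (F : Finset (I × Bool))
    (hF : ∀ f, f ∈ F ↔ ∃ t ∈ Set.Icc (0 : I → ℝ) 1, t f.1 = endpt f.2 ∧ A t + b = 0) :
    F.card = 2 := by
  classical
  obtain ⟨v, hvA, hv⟩ := (Submodule.ne_bot_iff _).1 hA
  rw [LinearMap.mem_ker] at hvA
  -- a kernel direction parallel to a facet that is hit would lead to a codimension two face
  have step1 : ∀ p ∈ Set.Icc (0 : I → ℝ) 1, ∀ k s, p k = endpt s → A p + b = 0 →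
      ∀ w, A w = 0 → w k = 0 → w = 0 := by
    intro p hp k s hps hp0 w hw hwk
    by_contra hne
    obtain ⟨a, ha, j, hj⟩ := exists_exit p w hp hne
    have hjk : k ≠ j := by
      rintro rfl
      rcases hj with hj | hj
      · exact hj.1.ne' hwk
      · exact hj.1.ne hwk
    have h0 : A (p + a • w) + b = 0 := by simp [hw, hp0]
    have hk : (p + a • w) k = endpt s := by simp [hwk, hps]
    rcases hj with hj | hj
    · exact hgen _ ha k j hjk s true hk (by simp [endpt, hj.2]) h0
    · exact hgen _ ha k j hjk s false hk (by simp [endpt, hj.2]) h0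
  -- facets through which the direction `u` leaves the cube
  let Out : (I → ℝ) → I × Bool → Prop := fun u f =>
    (0 < u f.1 ∧ f.2 = true) ∨ (u f.1 < 0 ∧ f.2 = false)
  have hex : ∀ u : I → ℝ, u ≠ 0 → A u = 0 → ∃ f ∈ F, Out u f := by
    intro u hu hu0
    obtain ⟨t, ht, ht0⟩ := hhit
    obtain ⟨a, ha, j, hj⟩ := exists_exit t u ht hu
    have h0 : A (t + a • u) + b = 0 := by simp [hu0, ht0]
    rcases hj with hj | hj
    · exact ⟨(j, true), (hF _).2 ⟨_, ha, by simp only [hj.2, endpt]; simp, h0⟩, Or.inl ⟨hj.1, rfl⟩⟩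
    · exact ⟨(j, false), (hF _).2 ⟨_, ha, by simp only [hj.2, endpt]; simp, h0⟩, Or.inr ⟨hj.1, rfl⟩⟩
  have huniq : ∀ u : I → ℝ, u ≠ 0 → A u = 0 → ∀ f ∈ F, ∀ g ∈ F, Out u f → Out u g → f = g := by
    rintro u hu hu0 ⟨k, s⟩ hf ⟨k', s'⟩ hg hof hog
    obtain ⟨p, hp, hpk, hp0⟩ := (hF _).1 hf
    obtain ⟨q, hq, hqk, hq0⟩ := (hF _).1 hg
    simp only at hpk hqk
    have huk : u k ≠ 0 := by
      rcases hof with h | h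
      · exact h.1.ne'
      · exact h.1.ne
    set μ := (q k - p k) / u k with hμ
    have hqp : q = p + μ • u := by
      have hw : A (q - p - μ • u) = 0 := by
        have : A q = A p := by
          rw [← sub_eq_zero, ← add_sub_add_right_eq_sub (A q) (A p) b, hq0, hp0, sub_zero]
        simp [hu0, this]
      have := step1 p hp k s hpk hp0 _ hw (by simp [hμ, huk])
      rw [sub_sub, sub_eq_zero] at this
      exact this
    have hμ0 : μ = 0 := by
      have h1 : q k = p k + μ * u k := by rw [hqp]; simp
      have h2 : q k' = p k' + μ * u k' := by rw [hqp]; simp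
      have a1 := hq.1 k
      have a2 := hq.2 k
      have a3 := hp.1 k'
      have a4 := hp.2 k'
      simp only [Pi.zero_apply, Pi.one_apply] at a1 a2 a3 a4
      apply le_antisymm
      · by_contra! hlt
        rcases hof with ⟨h, hs⟩ | ⟨h, hs⟩
        · simp only at h hs
          simp only [hs, endpt, if_true] at hpk
          nlinarith [mul_pos hlt h]
        · simp only at h hs
          simp only [hs, endpt, Bool.false_eq_true, if_false] at hpk
          nlinarith [mul_neg_of_pos_of_neg hlt h]
      · by_contra! hlt
        rcases hog with ⟨h, hs⟩ | ⟨h, hs⟩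
        · simp only at h hs
          simp only [hs, endpt, if_true] at hqk
          nlinarith [mul_neg_of_neg_of_pos hlt h]
        · simp only at h hs
          simp only [hs, endpt, Bool.false_eq_true, if_false] at hqk
          nlinarith [mul_pos_of_neg_of_neg hlt h]
    have hqp' : q = p := by rw [hqp, hμ0]; simp
    subst hqp'
    by_cases hkk : k = k'
    · subst hkk
      have : s = s' := by
        rw [hpk] at hqk
        revert hqk
        cases s <;> cases s' <;> simp [endpt]
      rw [this]
    · exact absurd hp0 (hgen q hp k k' hkk s s' hpk hqk)
  have hdich : ∀ f ∈ F, Out v f ∨ Out (-v) f := by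
    rintro ⟨k, s⟩ hf
    obtain ⟨p, hp, hpk, hp0⟩ := (hF _).1 hf
    have hvk : v k ≠ 0 := fun h => hv (step1 p hp k s hpk hp0 v hvA h)
    simp only [Out, Pi.neg_apply]
    rcases lt_or_gt_of_ne hvk with h | h <;> cases s <;> simp [h]
  obtain ⟨f, hf, hof⟩ := hex v hv hvA
  have hv' : -v ≠ 0 := neg_ne_zero.2 hv
  have hvA' : A (-v) = 0 := by simp [hvA]
  obtain ⟨g, hg, hog⟩ := hex (-v) hv' hvA'
  rw [Finset.card_eq_two]
  refine ⟨f, g, ?_, ?_⟩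
  · rintro rfl
    simp only [Out, Pi.neg_apply] at hof hog
    rcases hof with ⟨h1, h2⟩ | ⟨h1, h2⟩ <;> rcases hog with ⟨h3, h4⟩ | ⟨h3, h4⟩
    · linarith
    · exact absurd (h2.symm.trans h4) (by simp)
    · exact absurd (h2.symm.trans h4) (by simp)
    · linarith
  · ext x
    simp only [Finset.mem_insert, Finset.mem_singleton]
    constructor
    · intro hx
      rcases hdich x hx with h | h
      · exact Or.inl (huniq v hv hvA x hx f hf h hof)
      · exact Or.inr (huniq _ hv' hvA' x hx g hg h hog)
    · rintro (rfl | rfl) <;> assumption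

/-! ### Parity argument on a symmetric grid -/

/-- Given an array `V i p` of vectors, the sum over `i` of the piecewise linear curves with nodes
`V i p`, in local coordinates `t ∈ [0, 1]^I` on the grid cell with lower corner `c`. -/
def interp (V : I → ℤ → E) (c : I → ℤ) (t : I → ℝ) : E :=
  ∑ i, ((1 - t i) • V i (c i) + t i • V i (c i + 1))

/-- The interpolated sum `interp V` has a zero on the facet `t k = endpt s` of the cell `c`. -/
def FacetHit (V : I → ℤ → E) (c : I → ℤ) (k : I) (s : Bool) : Prop :=
  ∃ t ∈ Set.Icc (0 : I → ℝ) 1, t k = endpt s ∧ interp V c t = 0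

/-- The linear part of the affine map `interp V c`. -/
def interpLin (V : I → ℤ → E) (c : I → ℤ) : (I → ℝ) →ₗ[ℝ] E :=
  ∑ i, (LinearMap.proj i).smulRight (V i (c i + 1) - V i (c i))

lemma interp_eq (V : I → ℤ → E) (c : I → ℤ) (t : I → ℝ) :
    interp V c t = interpLin V c t + ∑ i, V i (c i) := by
  simp only [interp, interpLin, LinearMap.sum_apply, LinearMap.smulRight_apply,
    LinearMap.proj_apply, ← Finset.sum_add_distrib]
  refine Finset.sum_congr rfl fun i _ => ?_
  module

/-- The upper facet of a cell in direction `k` is the lower facet of the next cell. -/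
lemma facetHit_shift [DecidableEq I] (V : I → ℤ → E) (c : I → ℤ) (k : I) :
    FacetHit V c k true ↔ FacetHit V (Function.update c k (c k + 1)) k false := by
  constructor
  · rintro ⟨t, ht, htk, h0⟩
    refine ⟨Function.update t k 0, ⟨?_, ?_⟩, by simp [endpt], ?_⟩
    · intro i
      by_cases hi : i = k
      · subst hi; simp
      · simpa [hi] using ht.1 i
    · intro i
      by_cases hi : i = k
      · subst hi; simp
      · simpa [hi] using ht.2 i
    · rw [← h0]
      refine Finset.sum_congr rfl fun i _ => ?_
      by_cases hi : i = k
      · subst hi; simp [htk, endpt]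
      · simp [hi]
  · rintro ⟨t, ht, htk, h0⟩
    refine ⟨Function.update t k 1, ⟨?_, ?_⟩, by simp [endpt], ?_⟩
    · intro i
      by_cases hi : i = k
      · subst hi; simp
      · simpa [hi] using ht.1 i
    · intro i
      by_cases hi : i = k
      · subst hi; simp
      · simpa [hi] using ht.2 i
    · rw [← h0]
      refine Finset.sum_congr rfl fun i _ => ?_
      by_cases hi : i = k
      · subst hi; simp [htk, endpt]
      · simp [hi]

/-- For an array odd under `p ↦ 1 - p`, central symmetry maps the cell `c` to the cell `-c` and
changes the sign of the interpolated sum. -/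
lemma interp_neg (V : I → ℤ → E) (hV : ∀ i p, V i (1 - p) = - V i p) (c : I → ℤ) (t : I → ℝ) :
    interp V (-c) (1 - t) = - interp V c t := by
  simp only [interp, ← Finset.sum_neg_distrib]
  refine Finset.sum_congr rfl fun i _ => ?_
  have h1 : V i (-c i) = - V i (c i + 1) := by rw [← hV]; congr 1; ring
  have h2 : V i (-c i + 1) = - V i (c i) := by rw [← hV]; congr 1; ring
  simp only [Pi.neg_apply, Pi.sub_apply, Pi.one_apply, h1, h2]
  module

lemma one_sub_mem {I : Type*} {t : I → ℝ} (ht : t ∈ Set.Icc (0 : I → ℝ) 1) :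
    1 - t ∈ Set.Icc (0 : I → ℝ) 1 :=
  ⟨sub_nonneg.2 ht.2, sub_le_self _ ht.1⟩

lemma facetHit_neg (V : I → ℤ → E) (hV : ∀ i p, V i (1 - p) = - V i p) (c : I → ℤ) (k : I)
    (s : Bool) (h : FacetHit V c k s) : FacetHit V (-c) k (!s) := by
  obtain ⟨t, ht, htk, h0⟩ := h
  refine ⟨1 - t, one_sub_mem ht, ?_, ?_⟩
  · cases s <;> simp_all [endpt]
  · rw [interp_neg V hV, h0, neg_zero]

/-- The parity argument. Over the cells with corner in `[-n, n]^I`, suppose no zero lies on the outer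
boundary. Then each cell containing a zero has exactly two facets with a zero, and each
such facet is shared by two cells, so the number of such facets equals the number of such
cells. Central symmetry acts on the facets without fixed points, so the first number is even; it
fixes exactly the cell `0`, which contains a zero at its centre, so the second number is odd. -/
lemma exists_boundary_hit [DecidableEq I] [FiniteDimensional ℝ E]
    (hdim : Module.finrank ℝ E < Fintype.card I)
    (V : I → ℤ → E) (hV : ∀ i p, V i (1 - p) = - V i p) (n : ℤ) (hn : 0 ≤ n)
    (hgen : ∀ c ∈ Fintype.piFinset fun _ : I => Finset.Icc (-n) n,
      ∀ t ∈ Set.Icc (0 : I → ℝ) 1, ∀ i j, i ≠ j → ∀ s s', t i = endpt s →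
      t j = endpt s' → interp V c t ≠ 0) :
    ∃ c ∈ Fintype.piFinset fun _ : I => Finset.Icc (-n) n, ∃ k,
      (c k = n ∧ FacetHit V c k true) ∨ (c k = -n ∧ FacetHit V c k false) := by
  classical
  by_contra! hno
  set B := Fintype.piFinset fun _ : I => Finset.Icc (-n) n with hB
  have memB : ∀ c : I → ℤ, c ∈ B ↔ ∀ i, -n ≤ c i ∧ c i ≤ n := by
    intro c; simp [hB, Fintype.mem_piFinset]
  let Hit : (I → ℤ) → Prop := fun c => ∃ t ∈ Set.Icc (0 : I → ℝ) 1, interp V c t = 0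
  let H := B.filter Hit
  -- `U true` and `U false` collect the upper, respectively lower, facets carrying a zero.
  let U : Bool → Finset ((I → ℤ) × I) := fun s =>
    (B ×ˢ Finset.univ).filter fun x => FacetHit V x.1 x.2 s
  have memU : ∀ s c k, (c, k) ∈ U s ↔ c ∈ B ∧ FacetHit V c k s := by
    intro s c k; simp [U]
  have memB_update : ∀ c ∈ B, ∀ k z, -n ≤ z → z ≤ n → Function.update c k z ∈ B := by
    intro c hc k z h1 h2
    rw [memB] at hc ⊢
    intro i
    by_cases hi : i = k
    · subst hi; simp [h1, h2]
    · simpa [hi] using hc i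
  have negB : ∀ c ∈ B, -c ∈ B := by
    intro c hc
    rw [memB] at hc ⊢
    intro i
    have := hc i
    simp only [Pi.neg_apply]
    omega
  have upB : ∀ c k, (c, k) ∈ U true → Function.update c k (c k + 1) ∈ B := by
    intro c k h
    rw [memU] at h
    have h1 := (hno c h.1 k).1
    have h2 : c k ≠ n := fun h3 => h1 h3 h.2
    have h3 := (memB c).1 h.1 k
    exact memB_update c h.1 k _ (by omega) (by omega)
  have downB : ∀ c k, (c, k) ∈ U false → Function.update c k (c k - 1) ∈ B := by
    intro c k h
    rw [memU] at h
    have h1 := (hno c h.1 k).2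
    have h2 : c k ≠ -n := fun h3 => h1 h3 h.2
    have h3 := (memB c).1 h.1 k
    exact memB_update c h.1 k _ (by omega) (by omega)
  have shift_down : ∀ c k, (c, k) ∈ U false → (Function.update c k (c k - 1), k) ∈ U true := by
    intro c k h
    refine (memU _ _ _).2 ⟨downB c k h, ?_⟩
    rw [facetHit_shift]
    simpa using ((memU _ _ _).1 h).2
  have hcardU : (U true).card = (U false).card := by
    refine Finset.card_bij' (fun x _ => (Function.update x.1 x.2 (x.1 x.2 + 1), x.2))
      (fun x _ => (Function.update x.1 x.2 (x.1 x.2 - 1), x.2)) ?_ ?_ ?_ ?_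
    · rintro ⟨c, k⟩ h
      exact (memU _ _ _).2 ⟨upB c k h, (facetHit_shift V c k).1 ((memU _ _ _).1 h).2⟩
    · rintro ⟨c, k⟩ h
      exact shift_down c k h
    · rintro ⟨c, k⟩ h
      simp
    · rintro ⟨c, k⟩ h
      simp
  have hker : ∀ c, LinearMap.ker (interpLin V c) ≠ ⊥ := fun c =>
    LinearMap.ker_ne_bot_of_finrank_lt (by simpa using hdim)
  have hcount : ∀ c ∈ B, (∑ s : Bool, ∑ k : I, if FacetHit V c k s then 1 else 0) =
      if Hit c then 2 else 0 := by
    intro c hc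
    split_ifs with hh
    · rw [← card_hit_facets (interpLin V c) (∑ i, V i (c i)) (hker c)
        (fun t ht i j hij s s' h1 h2 => by
          rw [← interp_eq]; exact hgen c hc t ht i j hij s s' h1 h2)
        (by simpa only [← interp_eq] using hh)
        (Finset.univ.filter fun f : I × Bool => FacetHit V c f.1 f.2)
        (fun f => by simp [FacetHit, ← interp_eq])]
      rw [Finset.card_filter, Fintype.sum_prod_type, Finset.sum_comm]
    · refine Finset.sum_eq_zero fun s _ => Finset.sum_eq_zero fun k _ => if_neg ?_
      rintro ⟨t, ht, -, h0⟩
      exact hh ⟨t, ht, h0⟩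
  have hU : ∀ s, (U s).card = ∑ c ∈ B, ∑ k : I, if FacetHit V c k s then 1 else 0 := by
    intro s
    simp only [U, Finset.card_filter, Finset.sum_product]
  have htot : (U true).card + (U false).card = 2 * H.card := by
    rw [hU, hU, ← Finset.sum_add_distrib, Finset.card_filter, Finset.mul_sum]
    refine Finset.sum_congr rfl fun c hc => ?_
    have := hcount c hc
    rw [Fintype.sum_bool] at this
    rw [this]
    split_ifs <;> simp
  have hUH : (U true).card = H.card := by omega
  -- The involution negates a cell and records the image of the facet again as an upper facet.
  have hUeven : (((U true).card : ℕ) : ZMod 2) = 0 := by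
    rw [Finset.card_eq_sum_ones, Nat.cast_sum]
    refine Finset.sum_involution
      (fun x _ => (Function.update (-x.1) x.2 (-x.1 x.2 - 1), x.2)) ?_ ?_ ?_ ?_
    · intros; exact by decide
    · rintro ⟨c, k⟩ h - heq
      have := congrFun (congrArg Prod.fst heq) k
      simp at this
      omega
    · rintro ⟨c, k⟩ h
      have h' := (memU _ _ _).1 h
      exact shift_down (-c) k ((memU _ _ _).2 ⟨negB c h'.1, facetHit_neg V hV c k true h'.2⟩)
    · rintro ⟨c, k⟩ h
      simp only [Prod.mk.injEq, and_true]
      funext i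
      by_cases hi : i = k
      · subst hi; simp
      · simp [hi]
  have hHodd : ((H.card : ℕ) : ZMod 2) = 1 := by
    have h0 : (0 : I → ℤ) ∈ H := by
      refine Finset.mem_filter.2 ⟨(memB 0).2 fun i => by simp [hn], fun _ => 1 / 2, ⟨?_, ?_⟩, ?_⟩
      · intro i; norm_num
      · intro i; norm_num
      · refine Finset.sum_eq_zero fun i _ => ?_
        have := hV i 0
        simp only [sub_zero] at this
        simp only [Pi.zero_apply, zero_add, this]
        module
    rw [← Finset.card_erase_add_one h0, Nat.cast_add, Nat.cast_one, add_eq_right,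
      Finset.card_eq_sum_ones, Nat.cast_sum]
    refine Finset.sum_involution (fun c _ => -c) ?_ ?_ ?_ ?_
    · intros; exact by decide
    · rintro c hc - heq
      exact (Finset.mem_erase.1 hc).1 (by
        funext i
        have := congrFun heq i
        simp only [Pi.neg_apply] at this
        simp only [Pi.zero_apply]
        omega)
    · intro c hc
      obtain ⟨hc0, hcH⟩ := Finset.mem_erase.1 hc
      obtain ⟨hcB, t, ht, h0⟩ := Finset.mem_filter.1 hcH
      refine Finset.mem_erase.2 ⟨neg_ne_zero.2 hc0, Finset.mem_filter.2 ⟨negB c hcB, 1 - t,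
        one_sub_mem ht, ?_⟩⟩
      rw [interp_neg V hV, h0, neg_zero]
    · intros; simp
  rw [hUH, hHodd] at hUeven
  exact absurd hUeven (by decide)

end Module

/-! ### General position and passage to continuous curves -/

section Normed
variable {E : Type*} [NormedAddCommGroup E] [NormedSpace ℝ E]

/-- The antisymmetrization of an array under `p ↦ 1 - p`, without the factor `1 / 2`. -/
def oddPart (w : I → ℤ → E) (i : I) (p : ℤ) : E := w i p - w i (1 - p)

/-- The arrays whose antisymmetrization gives an interpolated sum without zeros on the face of
the cell `c` where `t i` and `t j` are fixed to the prescribed endpoints. -/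
def faceAvoid (c : I → ℤ) (i j : I) (s s' : Bool) : Set (I → ℤ → E) :=
  {w | ∀ t ∈ Set.Icc (0 : I → ℝ) 1, t i = endpt s → t j = endpt s' → interp (oddPart w) c t ≠ 0}

lemma isOpen_faceAvoid (c : I → ℤ) (i j : I) (s s' : Bool) :
    IsOpen (faceAvoid c i j s s' : Set (I → ℤ → E)) := by
  let T : Set (I → ℝ) := Set.Icc 0 1 ∩ ({t | t i = endpt s} ∩ {t | t j = endpt s'})
  have hT : IsCompact T := by
    refine isCompact_Icc.inter_right (IsClosed.inter ?_ ?_)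
    · exact isClosed_eq (continuous_apply i) continuous_const
    · exact isClosed_eq (continuous_apply j) continuous_const
  have hcont : Continuous fun x : (I → ℤ → E) × (I → ℝ) => interp (oddPart x.1) c x.2 := by
    unfold interp oddPart
    fun_prop
  rw [isOpen_iff_eventually]
  intro w hw
  have := hT.eventually_forall_of_forall_eventually (x₀ := w)
    (P := fun w t => interp (oddPart w) c t ≠ 0) (fun t ht => by
      have h0 : interp (oddPart w) c t ≠ 0 := hw t ht.1 ht.2.1 ht.2.2
      exact (hcont.continuousAt (x := (w, t))).eventually_ne h0)
  filter_upwards [this] with w' hw' t ht h1 h2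
  exact hw' t ⟨ht, h1, h2⟩

/-- The image of a codimension two face spans an affine subspace of dimension at most `dim E - 1`;
moving the single node at which the coordinate `i` is frozen translates this image, and a
translation transversal to it avoids the origin for all but at most one value of the parameter. -/
lemma dense_faceAvoid [FiniteDimensional ℝ E] (hdim : Module.finrank ℝ E + 1 = Fintype.card I)
    (c : I → ℤ) (i j : I) (hij : i ≠ j) (s s' : Bool) :
    Dense (faceAvoid c i j s s' : Set (I → ℤ → E)) := by
  classical
  intro w
  -- The directions of the face span a proper subspace.
  let S : Submodule ℝ E := Submodule.span ℝ
    (((Finset.univ.erase i).erase j).image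
      fun k => oddPart w k (c k + 1) - oddPart w k (c k) : Finset E)
  have hS : S ≠ ⊤ := by
    intro h
    have h1 := finrank_span_finset_le_card (R := ℝ) (((Finset.univ.erase i).erase j).image
      fun k => oddPart w k (c k + 1) - oddPart w k (c k))
    have h2 : Module.finrank ℝ S = Module.finrank ℝ E := by rw [h, finrank_top]
    have h3 := Finset.card_image_le (s := (Finset.univ.erase i).erase j)
      (f := fun k => oddPart w k (c k + 1) - oddPart w k (c k))
    rw [Finset.card_erase_of_mem (by simp [hij.symm]), Finset.card_erase_of_mem (by simp),
      Finset.card_univ] at h3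
    have h4 : 1 < Fintype.card I := Fintype.one_lt_card_iff.2 ⟨i, j, hij⟩
    have h5 : Module.finrank ℝ S ≤ _ := h1
    omega
  obtain ⟨u, hu⟩ : ∃ u, u ∉ S := by
    by_contra! h
    exact hS (eq_top_iff.2 fun x _ => h x)
  let q : ℤ := c i + if s then 1 else 0
  let W : ℝ → I → ℤ → E := fun ε => w + ε • (Pi.single i (Pi.single q u) : I → ℤ → E)
  have hWcont : Continuous W := by fun_prop
  have hodd : ∀ ε k, k ≠ i → oddPart (W ε) k = oddPart w k := by
    intro ε k hk
    funext p
    simp [oddPart, W, hk]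
  have hoddi : ∀ ε, oddPart (W ε) i q = oddPart w i q + ε • u := by
    intro ε
    have hq : 1 - q ≠ q := by omega
    simp [oddPart, W, hq]
    abel
  have hface : ∀ ε, ∀ t : I → ℝ, t i = endpt s → interp (oddPart (W ε)) c t =
      interp (oddPart w) c t + ε • u := by
    intro ε t ht
    unfold interp
    rw [← Finset.add_sum_erase _ _ (Finset.mem_univ i),
      ← Finset.add_sum_erase (a := i) Finset.univ
        (fun k => (1 - t k) • oddPart w k (c k) + t k • oddPart w k (c k + 1)) (Finset.mem_univ i)]
    have h1 : ∀ V : I → ℤ → E, (1 - t i) • V i (c i) + t i • V i (c i + 1) = V i q := by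
      intro V
      cases s <;> simp [ht, endpt, q]
    rw [h1, h1, hoddi, add_right_comm]
    congr 1
    congr 1
    refine Finset.sum_congr rfl fun k hk => ?_
    rw [hodd ε k (Finset.ne_of_mem_erase hk)]
  have hbad : Set.Subsingleton {ε | W ε ∉ faceAvoid c i j s s'} := by
    intro ε hε ε' hε'
    simp only [faceAvoid, Set.mem_ofPred_eq, not_forall, not_not] at hε hε'
    obtain ⟨t, ht, hti, htj, h0⟩ := hε
    obtain ⟨t', ht', hti', htj', h0'⟩ := hε'
    by_contra hne
    rw [hface ε t hti, interp_eq] at h0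
    rw [hface ε' t' hti', interp_eq] at h0'
    have hmem : interpLin (oddPart w) c (t' - t) ∈ S := by
      simp only [interpLin, LinearMap.sum_apply, LinearMap.smulRight_apply, LinearMap.proj_apply]
      refine Submodule.sum_mem _ fun k _ => ?_
      by_cases hk : k = i
      · subst hk; simp [hti, hti']
      by_cases hk' : k = j
      · subst hk'; simp [htj, htj']
      refine Submodule.smul_mem _ _ (Submodule.subset_span ?_)
      simp only [Finset.coe_image, Set.mem_image]
      exact ⟨k, by simp [hk, hk'], rfl⟩
    have heq : (ε - ε') • u = interpLin (oddPart w) c (t' - t) := by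
      rw [map_sub, sub_smul]
      have := h0.trans h0'.symm
      rw [← sub_eq_zero] at this ⊢
      rw [← this]
      abel
    rw [← heq] at hmem
    exact hu ((S.smul_mem_iff (sub_ne_zero.2 hne)).1 hmem)
  have hev : ∀ᶠ ε in nhdsWithin (0 : ℝ) {0}ᶜ, W ε ∈ faceAvoid c i j s s' := by
    have hfin : ({ε | W ε ∉ faceAvoid c i j s s'} \ {0}).Finite := hbad.finite.sdiff
    have : ({ε | W ε ∉ faceAvoid c i j s s'} \ {0})ᶜ ∈ nhds (0 : ℝ) :=
      hfin.isClosed.isOpen_compl.mem_nhds (by simp)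
    filter_upwards [mem_nhdsWithin_of_mem_nhds this, self_mem_nhdsWithin] with ε h1 h2
    by_contra h3
    exact h1 ⟨h3, h2⟩
  have hlim : Filter.Tendsto W (nhdsWithin (0 : ℝ) {0}ᶜ) (nhds w) := by
    have := (hWcont.tendsto 0).mono_left (nhdsWithin_le_nhds (s := {0}ᶜ))
    simpa [W] using this
  exact mem_closure_of_tendsto hlim hev

lemma dense_open_biInter {X α : Type*} [TopologicalSpace X] (F : Finset α) (G : α → Set X)
    (ho : ∀ a ∈ F, IsOpen (G a)) (hd : ∀ a ∈ F, Dense (G a)) :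
    Dense (⋂ a ∈ F, G a) := by
  classical
  induction F using Finset.induction_on with
  | empty => simp
  | insert a F ha ih =>
    rw [Finset.set_biInter_insert]
    exact (hd a (by simp)).inter_of_isOpen_left
      (ih (fun b hb => ho b (by simp [hb])) fun b hb => hd b (by simp [hb])) (ho a (by simp))

/-- An odd array has arbitrarily small odd perturbations (on a finite range of nodes) whose
interpolated sum has no zero on any codimension two face of the grid. -/
lemma exists_generic [FiniteDimensional ℝ E] (hdim : Module.finrank ℝ E + 1 = Fintype.card I)
    [DecidableEq I] (n : ℤ) (V₀ : I → ℤ → E) (hV₀ : ∀ i p, V₀ i (1 - p) = - V₀ i p)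
    {η : ℝ} (hη : 0 < η) :
    ∃ V : I → ℤ → E, (∀ i p, V i (1 - p) = - V i p) ∧
      (∀ i, ∀ p ∈ Finset.Icc (-n) (n + 1), ‖V i p - V₀ i p‖ < η) ∧
      ∀ c ∈ Fintype.piFinset fun _ : I => Finset.Icc (-n) n,
        ∀ t ∈ Set.Icc (0 : I → ℝ) 1, ∀ i j, i ≠ j → ∀ s s', t i = endpt s →
        t j = endpt s' → interp V c t ≠ 0 := by
  classical
  let F : Finset ((I → ℤ) × (I × I) × Bool × Bool) :=
    (Fintype.piFinset fun _ : I => Finset.Icc (-n) n) ×ˢ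
      (Finset.univ.filter fun x : I × I => x.1 ≠ x.2) ×ˢ Finset.univ
  have hdense := dense_open_biInter F
    (fun a => (faceAvoid a.1 a.2.1.1 a.2.1.2 a.2.2.1 a.2.2.2 : Set (I → ℤ → E)))
    (fun a _ => isOpen_faceAvoid _ _ _ _ _)
    (fun a ha => dense_faceAvoid hdim _ _ _ (by
      simp only [F, Finset.mem_product, Finset.mem_filter] at ha
      exact ha.2.1.2) _ _)
  let O : Set (I → ℤ → E) := ⋂ i : I, ⋂ p ∈ Finset.Icc (-n) (n + 1),
    {w | ‖w i p - (1 / 2 : ℝ) • V₀ i p‖ < η / 2}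
  have hO : IsOpen O := by
    refine isOpen_iInter_of_finite fun i => isOpen_biInter_finset fun p _ => ?_
    exact isOpen_lt (by fun_prop) continuous_const
  obtain ⟨w, hwO, hw⟩ := hdense.inter_open_nonempty O hO
    ⟨fun i p => (1 / 2 : ℝ) • V₀ i p, by simp [O, hη]⟩
  have hwO' : ∀ i, ∀ p, -n ≤ p → p ≤ n + 1 → ‖w i p - (1 / 2 : ℝ) • V₀ i p‖ < η / 2 := by
    intro i p h1 h2
    simp only [O, Set.mem_iInter, Finset.mem_Icc] at hwO
    exact hwO i p ⟨h1, h2⟩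
  refine ⟨oddPart w, fun i p => by simp [oddPart], fun i p hp => ?_, ?_⟩
  · rw [Finset.mem_Icc] at hp
    have h1 := hwO' i p hp.1 hp.2
    have h2 := hwO' i (1 - p) (by omega) (by omega)
    have : oddPart w i p - V₀ i p = (w i p - (1 / 2 : ℝ) • V₀ i p) -
        (w i (1 - p) - (1 / 2 : ℝ) • V₀ i (1 - p)) := by
      rw [hV₀, oddPart]; module
    rw [this]
    exact (norm_sub_le _ _).trans_lt (by linarith)
  · intro c hc t ht i j hij s s' h1 h2
    simp only [Set.mem_iInter] at hw
    exact hw (c, (i, j), s, s') (by simp only [F, Finset.mem_product, Finset.mem_filter,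
      Finset.mem_univ, true_and, and_true]; exact ⟨hc, hij⟩) t ht h1 h2

/-- The approximate form of `exists_zero_sum_odd_curves`: interpolate the curves on a fine symmetric
grid, perturb to general position, and apply the parity argument. -/
lemma exists_approx_zero [FiniteDimensional ℝ E] (hdim : Module.finrank ℝ E + 1 = Fintype.card I)
    (φ : I → ℝ → E) (hφ : ∀ i, Continuous (φ i)) (hodd : ∀ i x, φ i (-x) = - φ i x)
    {η : ℝ} (hη : 0 < η) :
    ∃ s : I → ℝ, s ∈ Set.Icc (-1) 1 ∧ (∃ k, |s k| = 1) ∧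
      ‖∑ i, φ i (s i)‖ ≤ Fintype.card I * (2 * η) := by
  classical
  -- A common modulus of continuity on `[-1, 1]`.
  have huc : UniformContinuousOn (fun x i => φ i x) (Set.Icc (-1 : ℝ) 1) :=
    isCompact_Icc.uniformContinuousOn_of_continuous (continuous_pi hφ).continuousOn
  obtain ⟨δ, hδ, hmod⟩ := Metric.uniformContinuousOn_iff.1 huc η hη
  obtain ⟨m, hm⟩ := exists_nat_gt (2 / δ)
  set n : ℤ := (m : ℤ) with hn
  set D : ℝ := 2 * m + 1 with hD
  have hDpos : 0 < D := by positivity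
  have hD2 : 2 / D < δ := by
    rw [div_lt_iff₀ hδ] at hm
    rw [div_lt_iff₀ hDpos]
    nlinarith [mul_nonneg (Nat.cast_nonneg (α := ℝ) m) hδ.le]
  -- The `2m + 2` nodes `p ∈ [-m, m + 1]` are equally spaced in `[-1, 1]`, and `p ↦ 1 - p` is the
  -- reflection in the origin.
  let pos : ℤ → ℝ := fun p => (2 * p - 1) / D
  have hpos1 : ∀ p, pos (1 - p) = - pos p := by
    intro p; simp only [pos]; push_cast; ring
  have hposS : ∀ p, pos (p + 1) = pos p + 2 / D := by
    intro p; simp only [pos]; push_cast; ring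
  have hposI : ∀ p : ℤ, -n ≤ p → p ≤ n + 1 → pos p ∈ Set.Icc (-1 : ℝ) 1 := by
    intro p h1 h2
    have h1' : -(m : ℝ) ≤ p := by exact_mod_cast h1
    have h2' : (p : ℝ) ≤ m + 1 := by exact_mod_cast h2
    constructor
    · rw [le_div_iff₀ hDpos]; simp only [hD]; linarith
    · rw [div_le_iff₀ hDpos]; simp only [hD]; linarith
  obtain ⟨V, hV, hclose, hgen⟩ := exists_generic hdim n (fun i p => φ i (pos p))
    (fun i p => by rw [hpos1, hodd]) hη
  obtain ⟨c, hc, k, hk⟩ := exists_boundary_hit (by omega) V hV n (by omega) hgen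
  have hc' : ∀ i, -n ≤ c i ∧ c i ≤ n := by
    intro i; simpa using (Fintype.mem_piFinset.1 hc) i
  obtain ⟨t, ht, h0, htk⟩ : ∃ t ∈ Set.Icc (0 : I → ℝ) 1, interp V c t = 0 ∧
      (c k = n ∧ t k = 1 ∨ c k = -n ∧ t k = 0) := by
    rcases hk with ⟨h, t, ht, htk, h0⟩ | ⟨h, t, ht, htk, h0⟩
    · exact ⟨t, ht, h0, Or.inl ⟨h, by simpa [endpt] using htk⟩⟩
    · exact ⟨t, ht, h0, Or.inr ⟨h, by simpa [endpt] using htk⟩⟩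
  have ht0 : ∀ i, 0 ≤ t i := fun i => ht.1 i
  have ht1 : ∀ i, t i ≤ 1 := fun i => ht.2 i
  let s : I → ℝ := fun i => pos (c i) + t i * (2 / D)
  have h2D : 0 < 2 / D := by positivity
  have hsI : ∀ i, s i ∈ Set.Icc (-1 : ℝ) 1 := by
    intro i
    have h1 := hposI (c i) (hc' i).1 (by linarith [(hc' i).2])
    have h2 := hposI (c i + 1) (by linarith [(hc' i).1]) (by linarith [(hc' i).2])
    rw [hposS] at h2
    constructor
    · have := mul_nonneg (ht0 i) h2D.le
      simp only [s]; linarith [h1.1]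
    · have := mul_le_mul_of_nonneg_right (ht1 i) h2D.le
      simp only [s]; linarith [h2.2]
  refine ⟨s, ⟨fun i => (hsI i).1, fun i => (hsI i).2⟩, ⟨k, ?_⟩, ?_⟩
  · rcases htk with ⟨h, h'⟩ | ⟨h, h'⟩
    · have : s k = 1 := by
        simp only [s, h, h', pos, hn, Int.cast_natCast, one_mul]
        rw [← add_div, div_eq_one_iff_eq hDpos.ne', hD]; ring
      rw [this]; simp
    · have : s k = -1 := by
        simp only [s, h, h', pos, hn, Int.cast_neg, Int.cast_natCast, zero_mul, add_zero]
        rw [div_eq_iff hDpos.ne', hD]; ring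
      rw [this]; simp
  · have hnear : ∀ i, ∀ p, -n ≤ p → p ≤ n + 1 → |s i - pos p| ≤ 2 / D →
        ‖φ i (s i) - V i p‖ ≤ 2 * η := by
      intro i p h1 h2 h3
      have h4 := hmod (s i) (hsI i) (pos p) (hposI p h1 h2) (by
        rw [Real.dist_eq]; exact h3.trans_lt hD2)
      have h5 : dist (φ i (s i)) (φ i (pos p)) < η := (dist_le_pi_dist _ _ i).trans_lt h4
      have h6 := hclose i p (Finset.mem_Icc.2 ⟨h1, h2⟩)
      rw [dist_eq_norm] at h5
      have : φ i (s i) - V i p = (φ i (s i) - φ i (pos p)) - (V i p - φ i (pos p)) := by abel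
      rw [this]
      exact (norm_sub_le _ _).trans (by linarith)
    have hsum : ∑ i, φ i (s i) = ∑ i, ((1 - t i) • (φ i (s i) - V i (c i)) +
        t i • (φ i (s i) - V i (c i + 1))) := by
      rw [← sub_zero (∑ i, φ i (s i)), ← h0, interp, ← Finset.sum_sub_distrib]
      refine Finset.sum_congr rfl fun i _ => ?_
      module
    rw [hsum]
    refine (norm_sum_le _ _).trans ?_
    rw [← nsmul_eq_mul, ← Finset.card_univ, ← Finset.sum_const]
    refine Finset.sum_le_sum fun i _ => ?_
    refine (norm_add_le _ _).trans ?_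
    rw [norm_smul, norm_smul, Real.norm_of_nonneg (ht0 i),
      Real.norm_of_nonneg (sub_nonneg.2 (ht1 i))]
    have h1 := hnear i (c i) (hc' i).1 (by linarith [(hc' i).2]) (by
      simp only [s, add_sub_cancel_left]
      rw [abs_of_nonneg (mul_nonneg (ht0 i) h2D.le)]
      exact mul_le_of_le_one_left h2D.le (ht1 i))
    have h2 := hnear i (c i + 1) (by linarith [(hc' i).1]) (by linarith [(hc' i).2]) (by
      simp only [s, hposS]
      rw [show pos (c i) + t i * (2 / D) - (pos (c i) + 2 / D) = -((1 - t i) * (2 / D)) by ring,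
        abs_neg, abs_of_nonneg (mul_nonneg (sub_nonneg.2 (ht1 i)) h2D.le)]
      exact mul_le_of_le_one_left h2D.le (by linarith [ht0 i]))
    have h3 := mul_le_mul_of_nonneg_left h1 (sub_nonneg.2 (ht1 i))
    have h4 := mul_le_mul_of_nonneg_left h2 (ht0 i)
    linarith

/-- A Borsuk-Ulam type theorem for sums of curves: `dim E + 1` odd continuous curves in `E` admit
parameters on the boundary of the cube `[-1, 1]^I` at which they sum to zero. -/
theorem exists_zero_sum_odd_curves [FiniteDimensional ℝ E]
    (hdim : Module.finrank ℝ E + 1 = Fintype.card I)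
    (φ : I → ℝ → E) (hφ : ∀ i, Continuous (φ i)) (hodd : ∀ i x, φ i (-x) = - φ i x) :
    ∃ s : I → ℝ, (∀ i, |s i| ≤ 1) ∧ (∃ k, |s k| = 1) ∧ ∑ i, φ i (s i) = 0 := by
  let K : Set (I → ℝ) := Set.Icc (-1) 1 ∩ ⋃ k, {s | |s k| = 1}
  have hK : IsCompact K := by
    refine isCompact_Icc.inter_right (isClosed_iUnion_of_finite fun k => ?_)
    exact isClosed_eq (by fun_prop) continuous_const
  have hne : K.Nonempty := by
    obtain ⟨s, hs, ⟨k, hk⟩, -⟩ := exists_approx_zero hdim φ hφ hodd one_pos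
    exact ⟨s, hs, Set.mem_iUnion.2 ⟨k, hk⟩⟩
  obtain ⟨s, ⟨hs, hsk⟩, hmin⟩ := hK.exists_isMinOn hne
    (f := fun s => ‖∑ i, φ i (s i)‖) (by fun_prop)
  obtain ⟨k, hk⟩ := Set.mem_iUnion.1 hsk
  refine ⟨s, fun i => abs_le.2 ⟨hs.1 i, hs.2 i⟩, ⟨k, hk⟩, ?_⟩
  have hcard : (0 : ℝ) < Fintype.card I := by
    rw [← hdim]; positivity
  by_contra h0
  have hpos : 0 < ‖∑ i, φ i (s i)‖ := norm_pos_iff.2 h0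
  obtain ⟨s', hs', ⟨k', hk'⟩, hle⟩ := exists_approx_zero hdim φ hφ hodd
    (η := ‖∑ i, φ i (s i)‖ / (4 * Fintype.card I)) (by positivity)
  have h1 : ‖∑ i, φ i (s i)‖ ≤ ‖∑ i, φ i (s' i)‖ := hmin ⟨hs', Set.mem_iUnion.2 ⟨k', hk'⟩⟩
  have h2 : (Fintype.card I : ℝ) * (2 * (‖∑ i, φ i (s i)‖ / (4 * Fintype.card I))) =
      ‖∑ i, φ i (s i)‖ / 2 := by field_simp; ring
  linarith
end Normed

end BorsukUlam

/-! ### Gaussian mixtures with matching moments, and packing -/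

section Gauss
variable {d : ℕ}

/-- The density at `y` of the Gaussian measure with mean `a` and identity covariance. -/
noncomputable def gaussDensity (a y : EuclideanSpace ℝ (Fin d)) : ℝ :=
  (2 * π) ^ (-(d : ℝ) / 2) * Real.exp (-‖y - a‖ ^ 2 / 2)

lemma gaussDensity_pos (a y : EuclideanSpace ℝ (Fin d)) : 0 < gaussDensity a y := by
  unfold gaussDensity; positivity

lemma integral_gaussDensity (a : EuclideanSpace ℝ (Fin d)) : ∫ y, gaussDensity a y = 1 := by
  have h := GaussianFourier.integral_rexp_neg_mul_sq_norm (V := EuclideanSpace ℝ (Fin d))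
    (b := 1 / 2) (by norm_num)
  have h1 : ∀ y : EuclideanSpace ℝ (Fin d), gaussDensity a y =
      (fun z => (2 * π) ^ (-(d : ℝ) / 2) * Real.exp (-(1 / 2) * ‖z‖ ^ 2)) (y - a) := by
    intro y
    simp only [gaussDensity]
    congr 2
    ring
  simp_rw [h1]
  rw [integral_sub_right_eq_self
    (fun z : EuclideanSpace ℝ (Fin d) => (2 * π) ^ (-(d : ℝ) / 2) * Real.exp (-(1 / 2) * ‖z‖ ^ 2)),
    integral_const_mul, h, finrank_euclideanSpace_fin, show π / (1 / 2) = 2 * π by ring,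
    ← Real.rpow_add (by positivity)]
  rw [show -(d : ℝ) / 2 + d / 2 = 0 by ring, Real.rpow_zero]

lemma integrable_gaussDensity (a : EuclideanSpace ℝ (Fin d)) : Integrable (gaussDensity a) := by
  by_contra h
  have := integral_gaussDensity a
  rw [integral_undef h] at this
  exact zero_ne_one this

lemma gaussDensity_mul (a b y : EuclideanSpace ℝ (Fin d)) :
    gaussDensity a y * gaussDensity b y =
      gaussDensity 0 y * (Real.exp (inner ℝ a b) * gaussDensity (a + b) y) := by
  have : Real.exp (-‖y - a‖ ^ 2 / 2) * Real.exp (-‖y - b‖ ^ 2 / 2) =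
      Real.exp (-‖y - 0‖ ^ 2 / 2) * (Real.exp (inner ℝ a b) * Real.exp (-‖y - (a + b)‖ ^ 2 / 2)) := by
    rw [← Real.exp_add, ← Real.exp_add, ← Real.exp_add]
    congr 1
    rw [sub_zero, norm_sub_sq_real, norm_sub_sq_real, norm_sub_sq_real, inner_add_right,
      norm_add_sq_real]
    ring
  unfold gaussDensity
  linear_combination ((2 * π) ^ (-(d : ℝ) / 2)) ^ 2 * this

/-- The Taylor remainder `∑_{j ≥ M} |u|^j / j!` is at most `400^{-M} ∑_j (400 |u|)^j / j!`. -/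
lemma exp_tail_bound (M : ℕ) {u x : ℝ} (hu : |u| ≤ x) :
    |Real.exp u - ∑ j ∈ Finset.range M, u ^ j / j.factorial| ≤
      ((400 : ℝ) ^ M)⁻¹ * Real.exp (400 * x) := by
  have hx : 0 ≤ x := (abs_nonneg u).trans hu
  have hs : ∀ z : ℝ, HasSum (fun n : ℕ => z ^ n / n.factorial) (Real.exp z) := by
    intro z
    rw [Real.exp_eq_exp_ℝ]
    exact NormedSpace.expSeries_div_hasSum_exp z
  have h1 : Real.exp u - ∑ j ∈ Finset.range M, u ^ j / j.factorial =
      ∑' j : ℕ, u ^ (j + M) / (j + M).factorial := by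
    rw [← (hs u).tsum_eq, ← (hs u).summable.sum_add_tsum_nat_add M]
    ring
  have hs' := (summable_nat_add_iff M).2 (hs (400 * x)).summable
  rw [h1, ← Real.norm_eq_abs]
  refine (tsum_of_norm_bounded (hs'.hasSum.mul_left ((400 : ℝ) ^ M)⁻¹) fun j => ?_).trans ?_
  · rw [norm_div, norm_pow, Real.norm_eq_abs, Real.norm_of_nonneg (Nat.cast_nonneg _), mul_pow,
      ← mul_div_assoc]
    gcongr
    have h2 : |u| ^ (j + M) ≤ x ^ (j + M) := by gcongr
    refine h2.trans ?_
    have h3 : (1 : ℝ) ≤ (400 ^ M)⁻¹ * 400 ^ (j + M) := by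
      rw [pow_add, mul_comm, mul_assoc, mul_inv_cancel₀ (by positivity), mul_one]
      exact one_le_pow₀ (by norm_num)
    have h4 : 0 ≤ x ^ (j + M) := by positivity
    nlinarith
  · gcongr
    rw [← (hs (400 * x)).tsum_eq, ← (hs (400 * x)).summable.sum_add_tsum_nat_add M]
    have : 0 ≤ ∑ j ∈ Finset.range M, (400 * x) ^ j / (j.factorial : ℝ) :=
      Finset.sum_nonneg fun j _ => by positivity
    linarith

/-- If a signed combination of unit Gaussians, with total weight at most `2` and means in the ball
of radius `R`, annihilates all moments of degree less than `M`, its `L¹` norm is at most `2 √(400^{-M} e^{400 R²})`. By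
Cauchy-Schwarz against the standard Gaussian density, the square of the norm is bounded by
`∑ ε_k ε_l exp ⟨a_k, a_l⟩`, where the Taylor terms of degree less than `M` cancel. -/
lemma integral_abs_gauss_sum_le {κ : Type*} [Fintype κ] (ε : κ → ℝ)
    (a : κ → EuclideanSpace ℝ (Fin d)) (M : ℕ) {R l : ℝ} (hl : 0 < l)
    (hε : ∑ k, |ε k| ≤ 2) (ha : ∀ k, ‖a k‖ ≤ R)
    (hmom : ∀ b : EuclideanSpace ℝ (Fin d), ∀ j < M, ∑ k, ε k * inner ℝ (a k) b ^ j = 0)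
    (hlam : 4 * (((400 : ℝ) ^ M)⁻¹ * Real.exp (400 * R ^ 2)) ≤ l ^ 2) :
    ∫ y, |∑ k, ε k * gaussDensity (a k) y| ≤ l := by
  set τ := ((400 : ℝ) ^ M)⁻¹ * Real.exp (400 * R ^ 2) with hτ
  have hτ0 : 0 ≤ τ := by positivity
  let h : EuclideanSpace ℝ (Fin d) → ℝ := fun y =>
    ∑ k, ∑ k', ε k * ε k' * Real.exp (inner ℝ (a k) (a k')) * gaussDensity (a k + a k') y
  have hint : Integrable h :=
    integrable_finsetSum _ fun k _ => integrable_finsetSum _ fun k' _ =>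
      (integrable_gaussDensity _).const_mul _
  have hsq : ∀ y, (∑ k, ε k * gaussDensity (a k) y) ^ 2 = gaussDensity 0 y * h y := by
    intro y
    rw [sq, Finset.sum_mul_sum]
    simp only [h, Finset.mul_sum]
    refine Finset.sum_congr rfl fun k _ => Finset.sum_congr rfl fun k' _ => ?_
    linear_combination (ε k * ε k') * gaussDensity_mul (a k) (a k') y
  have hI : ∫ y, h y = ∑ k, ∑ k', ε k * ε k' * Real.exp (inner ℝ (a k) (a k')) := by
    simp only [h]
    rw [integral_finsetSum _ fun k _ => integrable_finsetSum _ fun k' _ =>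
      (integrable_gaussDensity _).const_mul _]
    refine Finset.sum_congr rfl fun k _ => ?_
    rw [integral_finsetSum _ fun k' _ => (integrable_gaussDensity _).const_mul _]
    refine Finset.sum_congr rfl fun k' _ => ?_
    rw [integral_const_mul, integral_gaussDensity, mul_one]
  have hIle : ∫ y, h y ≤ l ^ 2 := by
    refine le_trans ?_ hlam
    have h0 : ∑ k, ∑ k', ε k * ε k' *
        (∑ j ∈ Finset.range M, (inner ℝ (a k) (a k') : ℝ) ^ j / j.factorial) = 0 := by
      rw [Finset.sum_comm]
      refine Finset.sum_eq_zero fun k' _ => ?_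
      simp only [Finset.mul_sum]
      rw [Finset.sum_comm]
      refine Finset.sum_eq_zero fun j hj => ?_
      have := hmom (a k') j (Finset.mem_range.1 hj)
      rw [← mul_zero (ε k' / j.factorial), ← this, Finset.mul_sum]
      refine Finset.sum_congr rfl fun k _ => ?_
      ring
    rw [hI, ← sub_zero (∑ k, _), ← h0, ← Finset.sum_sub_distrib]
    simp only [← Finset.sum_sub_distrib, ← mul_sub]
    calc _ ≤ ∑ k, ∑ k', |ε k| * |ε k'| * τ := by
          refine Finset.sum_le_sum fun k _ => Finset.sum_le_sum fun k' _ => ?_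
          refine (le_abs_self _).trans ?_
          rw [abs_mul, abs_mul]
          refine mul_le_mul_of_nonneg_left (exp_tail_bound M ?_) (by positivity)
          refine (abs_real_inner_le_norm _ _).trans ?_
          rw [sq]
          exact mul_le_mul (ha k) (ha k') (norm_nonneg _) ((norm_nonneg _).trans (ha k))
      _ = (∑ k, |ε k|) * (∑ k, |ε k|) * τ := by
          rw [Finset.sum_mul_sum, Finset.sum_mul]
          simp only [Finset.sum_mul]
      _ ≤ 4 * τ := by
          have h1 : 0 ≤ ∑ k, |ε k| := Finset.sum_nonneg fun _ _ => abs_nonneg _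
          refine mul_le_mul_of_nonneg_right ?_ hτ0
          nlinarith
  calc ∫ y, |∑ k, ε k * gaussDensity (a k) y|
      ≤ ∫ y, (l / 2 * gaussDensity 0 y + 1 / (2 * l) * h y) := by
        refine integral_mono_of_nonneg (Filter.Eventually.of_forall fun y => abs_nonneg _)
          (((integrable_gaussDensity 0).const_mul _).add (hint.const_mul _))
          (Filter.Eventually.of_forall fun y => ?_)
        simp only
        have hg := gaussDensity_pos 0 y
        set S := ∑ k, ε k * gaussDensity (a k) y with hS
        have h1 : |S| ^ 2 = gaussDensity 0 y * h y := by rw [sq_abs, hS, hsq]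
        -- The weighted inequality `2 l |S| ≤ |S|² / g + l² g` replaces Cauchy-Schwarz.
        have h2 := sq_nonneg (|S| - l * gaussDensity 0 y)
        have h3 : gaussDensity 0 y * (2 * l * |S|) ≤
            gaussDensity 0 y * (h y + l ^ 2 * gaussDensity 0 y) := by nlinarith
        have h4 := le_of_mul_le_mul_left h3 hg
        have h5 : |S| ≤ (h y + l ^ 2 * gaussDensity 0 y) / (2 * l) := by
          rw [le_div_iff₀ (by positivity)]; linarith
        refine h5.trans (le_of_eq ?_)
        field_simp
        ring
    _ = l / 2 + 1 / (2 * l) * ∫ y, h y := by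
        rw [integral_add ((integrable_gaussDensity 0).const_mul _) (hint.const_mul _),
          integral_const_mul, integral_const_mul, integral_gaussDensity, mul_one]
    _ ≤ l / 2 + 1 / (2 * l) * l ^ 2 := by gcongr
    _ = l := by field_simp; ring

/-- Greedy packing: as long as `n` balls of radius `δ` cannot cover the ball of radius `r` by volume,
a further separated point can be added. -/
lemma exists_separated_in_ball {δ r : ℝ} (hδ : 0 < δ) (hr : 0 < r) (n : ℕ)
    (hn : n * δ ^ d ≤ r ^ d) :
    ∃ x : Fin n → EuclideanSpace ℝ (Fin d), (∀ i, ‖x i‖ ≤ r) ∧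
      ∀ i j, i ≠ j → δ ≤ ‖x i - x j‖ := by
  induction n with
  | zero => exact ⟨Fin.elim0, fun i => i.elim0, fun i => i.elim0⟩
  | succ n ih =>
    have hδd : 0 < δ ^ d := by positivity
    push_cast at hn
    have hlt : n * δ ^ d < r ^ d := by linarith
    obtain ⟨x, hx, hsep⟩ := ih hlt.le
    obtain ⟨y, hy, hyx⟩ : ∃ y ∈ Metric.ball (0 : EuclideanSpace ℝ (Fin d)) r,
        ∀ i, δ ≤ ‖y - x i‖ := by
      by_contra! hcov
      have hsub : Metric.ball (0 : EuclideanSpace ℝ (Fin d)) r ⊆ ⋃ i, Metric.ball (x i) δ := by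
        intro y hy
        obtain ⟨i, hi⟩ := hcov y hy
        exact Set.mem_iUnion.2 ⟨i, by rwa [Metric.mem_ball, dist_eq_norm]⟩
      have h1 := (measure_mono (μ := volume) hsub).trans (measure_iUnion_le _)
      have hvol : ∀ (z : EuclideanSpace ℝ (Fin d)) (ρ : ℝ), 0 < ρ → volume (Metric.ball z ρ) =
          ENNReal.ofReal (ρ ^ d) * volume (Metric.ball (0 : EuclideanSpace ℝ (Fin d)) 1) :=
        fun z ρ hρ => by rw [Measure.addHaar_ball_of_pos volume z hρ, finrank_euclideanSpace_fin]
      rw [hvol 0 r hr, tsum_fintype, Finset.sum_congr rfl fun i _ => hvol (x i) δ hδ,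
        Finset.sum_const, Finset.card_univ, Fintype.card_fin, nsmul_eq_mul, ← mul_assoc] at h1
      have hb0 : volume (Metric.ball (0 : EuclideanSpace ℝ (Fin d)) 1) ≠ 0 :=
        (Metric.measure_ball_pos _ _ one_pos).ne'
      have hb1 : volume (Metric.ball (0 : EuclideanSpace ℝ (Fin d)) 1) ≠ ⊤ :=
        measure_ball_lt_top.ne
      have h2 := (ENNReal.mul_le_mul_iff_left hb0 hb1).1 h1
      rw [← ENNReal.ofReal_natCast, ← ENNReal.ofReal_mul (by positivity),
        ENNReal.ofReal_le_ofReal_iff (by positivity)] at h2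
      linarith
    refine ⟨Fin.cons y x, ?_, ?_⟩
    · intro i
      refine Fin.cases ?_ (fun i => ?_) i
      · simpa using (mem_ball_zero_iff.1 hy).le
      · simpa using hx i
    · intro i j
      refine Fin.cases ?_ (fun i => ?_) i <;> refine Fin.cases ?_ (fun j => ?_) j
      · simp
      · intro _; simpa using hyx j
      · intro _; rw [norm_sub_rev]; simpa using hyx i
      · intro hij
        simpa using hsep i j (fun h => hij (by rw [h]))

end Gauss

/-! ### Numerical estimates and moments -/

section Numerics

/-- From `choose (n + d) d ≤ (n + d)^d / d!` and `d! ≥ (d / e)^d`. -/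
lemma choose_add_one_le {n d : ℕ} (hd : 1 ≤ d) {y : ℝ} (hn : (n : ℝ) ≤ y)
    (hdy : (d : ℝ) ≤ y / 100) :
    (((n + d).choose d : ℕ) : ℝ) + 1 ≤ (3 * Real.exp 1 * y / d) ^ d := by
  have hd' : (1 : ℝ) ≤ d := by exact_mod_cast hd
  have he : 1 ≤ Real.exp 1 := Real.one_le_exp zero_le_one
  have h1 : (((n + d).choose d : ℕ) : ℝ) ≤ ((n + d : ℕ) : ℝ) ^ d / d.factorial :=
    Nat.choose_le_pow_div d (n + d)
  have h2 : (d : ℝ) ^ d / d.factorial ≤ Real.exp 1 ^ d := by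
    rw [← Real.exp_nat_mul, mul_one]
    exact Real.pow_div_factorial_le_exp _ (by positivity) _
  have h3 : ((n + d : ℕ) : ℝ) ^ d / d.factorial ≤ (((n + d : ℕ) : ℝ) / d * Real.exp 1) ^ d := by
    calc ((n + d : ℕ) : ℝ) ^ d / d.factorial
        = (((n + d : ℕ) : ℝ) / d) ^ d * ((d : ℝ) ^ d / d.factorial) := by
          rw [div_pow]; field_simp
      _ ≤ _ := by rw [mul_pow]; gcongr
  have h4 : 1 ≤ ((n + d : ℕ) : ℝ) / d * Real.exp 1 := by
    have : 1 ≤ ((n + d : ℕ) : ℝ) / d := by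
      rw [le_div_iff₀ (by linarith)]; push_cast; linarith [(Nat.cast_nonneg n : (0 : ℝ) ≤ n)]
    nlinarith
  have h5 : 1 ≤ (((n + d : ℕ) : ℝ) / d * Real.exp 1) ^ d := one_le_pow₀ h4
  have h6 : (2 : ℝ) ≤ 2 ^ d := by
    calc (2 : ℝ) = 2 ^ 1 := by norm_num
      _ ≤ 2 ^ d := pow_le_pow_right₀ (by norm_num) hd
  calc (((n + d).choose d : ℕ) : ℝ) + 1 ≤ 2 * (((n + d : ℕ) : ℝ) / d * Real.exp 1) ^ d := by
        linarith
    _ ≤ 2 ^ d * (((n + d : ℕ) : ℝ) / d * Real.exp 1) ^ d := by gcongr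
    _ = (2 * ((n + d : ℕ) : ℝ) * Real.exp 1 / d) ^ d := by rw [← mul_pow]; congr 1; ring
    _ ≤ _ := by
        have : 2 * ((n + d : ℕ) : ℝ) ≤ 3 * y := by push_cast; linarith
        gcongr ?_ ^ d
        gcongr ?_ / _
        nlinarith

lemma dim_le_log {d : ℕ} (hd : 1 ≤ d) {C L : ℝ} (hL : 0 < L) (hC : 100 ≤ C)
    (h : Real.log (8 * Real.exp 1 * C) ≤ (1 - 1 / Real.exp 1) * L / d) : (d : ℝ) ≤ L := by
  have hd' : (1 : ℝ) ≤ d := by exact_mod_cast hd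
  have he := Real.exp_pos 1
  have h1 : 1 ≤ Real.log (8 * Real.exp 1 * C) := by
    rw [Real.le_log_iff_exp_le (by positivity)]; nlinarith
  have h2 := h1.trans h
  rw [le_div_iff₀ (by linarith)] at h2
  have : 0 < 1 / Real.exp 1 := by positivity
  nlinarith

/-- With `8` in place of `3` and after taking logarithms, this is
`d log (8 e C) + d log (log k / d) ≤ log k`, where the last logarithm is bounded by `log t ≤ t / e`. -/
lemma pow_le_of_log_le {d : ℕ} (hd : 1 ≤ d) {C k : ℝ} (hk : 0 < k) (hL : 0 < Real.log k)
    (hC : 100 ≤ C)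
    (h : Real.log (8 * Real.exp 1 * C) ≤ (1 - 1 / Real.exp 1) * Real.log k / d) :
    (3 * Real.exp 1 * (C * Real.log k) / d) ^ d ≤ k := by
  have hd' : (1 : ℝ) ≤ d := by exact_mod_cast hd
  have he := Real.exp_pos 1
  set L := Real.log k with hLdef
  have h8 : (3 * Real.exp 1 * (C * L) / d) ^ d ≤ (8 * Real.exp 1 * C * (L / d)) ^ d := by
    gcongr ?_ ^ d
    rw [show 3 * Real.exp 1 * (C * L) / d = 3 * (Real.exp 1 * C * (L / d)) by ring,
      show 8 * Real.exp 1 * C * (L / d) = 8 * (Real.exp 1 * C * (L / d)) by ring]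
    gcongr
    norm_num
  refine h8.trans ?_
  rw [← Real.log_le_log_iff (by positivity) hk, Real.log_pow,
    Real.log_mul (by positivity) (by positivity), ← hLdef]
  have ht : Real.log (L / d) ≤ L / d / Real.exp 1 := by
    have := Real.log_le_sub_one_of_pos (x := L / d / Real.exp 1) (by positivity)
    rw [Real.log_div (by positivity) he.ne', Real.log_exp] at this
    linarith
  calc (d : ℝ) * (Real.log (8 * Real.exp 1 * C) + Real.log (L / d))
      ≤ d * ((1 - 1 / Real.exp 1) * L / d + L / d / Real.exp 1) := by gcongr
    _ = L := by field_simp; ring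

lemma tail_le {y : ℝ} {M : ℕ} (hM : y ≤ M) :
    4 * (((400 : ℝ) ^ M)⁻¹ * Real.exp y) ≤ (2 * Real.exp (-y)) ^ 2 := by
  have h3 : Real.exp 3 ≤ 400 := by
    have : Real.exp 3 = Real.exp 1 ^ 3 := by rw [← Real.exp_nat_mul]; norm_num
    rw [this]
    calc Real.exp 1 ^ 3 ≤ 3 ^ 3 := by gcongr; exact Real.exp_one_lt_three.le
      _ ≤ 400 := by norm_num
  have h4 : Real.exp (3 * y) ≤ 400 ^ M := by
    calc Real.exp (3 * y) ≤ Real.exp (M * 3) := Real.exp_le_exp.2 (by linarith)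
      _ = Real.exp 3 ^ M := Real.exp_nat_mul _ _
      _ ≤ 400 ^ M := by gcongr
  have h5 : ((400 : ℝ) ^ M)⁻¹ ≤ Real.exp (-(3 * y)) := by
    rw [Real.exp_neg]; gcongr
  calc 4 * (((400 : ℝ) ^ M)⁻¹ * Real.exp y) ≤ 4 * (Real.exp (-(3 * y)) * Real.exp y) := by gcongr
    _ = (2 * Real.exp (-y)) ^ 2 := by
      rw [mul_pow, ← Real.exp_add, ← Real.exp_nat_mul]; ring_nf

/-- The number of monomials of degree at most `n` in `d` variables. -/
lemma card_monomials (n d : ℕ) :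
    Fintype.card (Σ j : Fin (n + 1), Sym (Fin d) j) = (n + d).choose d := by
  rw [Fintype.card_sigma, ← Nat.sum_range_multichoose, ← Fin.sum_univ_eq_sum_range]
  refine Finset.sum_congr rfl fun j _ => ?_
  rw [Sym.card_sym_eq_multichoose, Fintype.card_fin]

end Numerics

section Moments
variable {d : ℕ}

/-- The value at `y` of the monomial of degree `j` whose multiset of variables is `σ`. -/
noncomputable def monomialVal {j : ℕ} (σ : Sym (Fin d) j) (y : EuclideanSpace ℝ (Fin d)) : ℝ :=
  (σ.1.map fun l => y l).prod

lemma continuous_monomialVal {j : ℕ} (σ : Sym (Fin d) j) :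
    Continuous (monomialVal σ) := by
  unfold monomialVal
  exact continuous_multiset_prod _ fun l _ => by fun_prop

lemma inner_pow_eq (y b : EuclideanSpace ℝ (Fin d)) (j : ℕ) :
    (inner ℝ y b : ℝ) ^ j =
      ∑ σ : Sym (Fin d) j, (σ.1.countPerms : ℝ) * monomialVal σ b * monomialVal σ y := by
  rw [PiLp.inner_apply]
  simp only [RCLike.inner_apply, conj_trivial]
  rw [Finset.sum_pow, Finset.sym_univ]
  refine Finset.sum_congr rfl fun σ _ => ?_
  simp only [monomialVal, Multiset.prod_map_mul]
  ring

end Moments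

/-- Given one more point than there are monomials of degree less than `M`, the points can be moved
by `± s i • v`, with `|s i| ≤ 1` and equality for some `i`, so that both choices of sign give the
same moments of degree less than `M`: the differences of monomials are odd curves in `s i`. -/
lemma exists_matching_moments {d N : ℕ} (M : ℕ)
    (hN : Fintype.card (Σ j : Fin M, Sym (Fin d) j) + 1 = N)
    (x : Fin N → EuclideanSpace ℝ (Fin d)) (v : EuclideanSpace ℝ (Fin d)) :
    ∃ s : Fin N → ℝ, (∀ i, |s i| ≤ 1) ∧ (∃ i, |s i| = 1) ∧
      ∀ (b : EuclideanSpace ℝ (Fin d)), ∀ j < M,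
        ∑ i, (inner ℝ (x i + s i • v) b : ℝ) ^ j = ∑ i, (inner ℝ (x i - s i • v) b : ℝ) ^ j := by
  let φ : Fin N → ℝ → ((Σ j : Fin M, Sym (Fin d) j) → ℝ) := fun i t p =>
    monomialVal p.2 (x i + t • v) - monomialVal p.2 (x i - t • v)
  obtain ⟨s, hs, hs1, hsum⟩ := exists_zero_sum_odd_curves (I := Fin N)
    (E := (Σ j : Fin M, Sym (Fin d) j) → ℝ) (by simpa using hN) φ
    (fun i => continuous_pi fun p =>
      ((continuous_monomialVal p.2).comp (by fun_prop)).sub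
        ((continuous_monomialVal p.2).comp (by fun_prop)))
    (fun i t => by
      funext p
      simp only [φ, Pi.neg_apply, neg_smul, sub_neg_eq_add, ← sub_eq_add_neg, neg_sub])
  refine ⟨s, hs, hs1, fun b j hj => ?_⟩
  have key : ∀ σ : Sym (Fin d) j, ∑ i, monomialVal σ (x i + s i • v) =
      ∑ i, monomialVal σ (x i - s i • v) := by
    intro σ
    have := congrFun hsum ⟨⟨j, hj⟩, σ⟩
    simpa [φ, Finset.sum_apply, Finset.sum_sub_distrib, sub_eq_zero] using this
  simp only [inner_pow_eq]
  rw [Finset.sum_comm, Finset.sum_comm (s := Finset.univ (α := Fin N))]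
  refine Finset.sum_congr rfl fun σ _ => ?_
  rw [← Finset.mul_sum, ← Finset.mul_sum, key]

/-! ### The lower bound -/

/-- Lower bound (Theorem "lower"): two Δ-separated mixtures of at most `k`
spherical Gaussians whose means are not (Δ/2)-close under any matching, yet
whose total variation distance is at most `2k^{−C}`. -/
theorem lower_bound_hard_mixtures
    (k d : ℕ) (hk : 3 ≤ k) (hd : 1 ≤ d)
    (hdk : (d : ℝ) ≤ Real.log k / Real.log (Real.log k))
    (C : ℝ) (hC : 100 ≤ C)
    (hC2 : Real.log (8 * Real.exp 1 * C) ≤ (1 - 1 / Real.exp 1) * Real.log k / d)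
    (Δ : ℝ) (hΔ : Δ = d / (240 * Real.exp 1 * Real.sqrt (C * Real.log k))) :
    ∃ N : ℕ, 1 ≤ N ∧ N ≤ k ∧
      ∃ μP μQ : Fin N → EuclideanSpace ℝ (Fin d),
        (∀ i j, i ≠ j → Δ ≤ ‖μP i - μP j‖) ∧
        (∀ i j, i ≠ j → Δ ≤ ‖μQ i - μQ j‖) ∧
        (∀ perm : Equiv.Perm (Fin N), ∃ i, Δ / 2 < ‖μP i - μQ (perm i)‖) ∧
        (1 / 2) * ∫ x : EuclideanSpace ℝ (Fin d),
            |(1 / N : ℝ) * ∑ i : Fin N, (2 * π) ^ (-(d : ℝ) / 2)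
                * Real.exp (-‖x - μP i‖ ^ 2 / 2)
              - (1 / N : ℝ) * ∑ i : Fin N, (2 * π) ^ (-(d : ℝ) / 2)
                * Real.exp (-‖x - μQ i‖ ^ 2 / 2)|
          ≤ 2 * (k : ℝ) ^ (-C) := by
  have hk0 : (0 : ℝ) < k := by exact_mod_cast (by omega : 0 < k)
  have hL : 0 < Real.log k := Real.log_pos (by exact_mod_cast (by omega : 1 < k))
  have hd' : (1 : ℝ) ≤ d := by exact_mod_cast hd
  have he := Real.exp_pos 1
  have he2 : 2 ≤ Real.exp 1 := by linarith [Real.add_one_le_exp (1 : ℝ)]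
  have hdL := dim_le_log hd hL hC hC2
  have hpow := pow_le_of_log_le hd hk0 hL hC hC2
  have hexp : Real.exp (-(C * Real.log k)) = (k : ℝ) ^ (-C) := by
    rw [Real.rpow_def_of_pos hk0]; congr 1; ring
  have hdy' : (d : ℝ) ≤ C * Real.log k / 100 := by nlinarith
  rw [← hexp]
  set y := C * Real.log k with hy
  have hy0 : 0 < y := by positivity
  set q := Real.sqrt y with hq
  have hq0 : 0 < q := Real.sqrt_pos.2 hy0
  have hqq : q ^ 2 = y := Real.sq_sqrt hy0.le
  have hΔ0 : 0 < Δ := by rw [hΔ]; positivity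
  -- Moments of degree at most `n`, that is of degree less than `⌈y⌉`, will be matched.
  obtain ⟨n, hn⟩ : ∃ n, ⌈y⌉₊ = n + 1 := Nat.exists_eq_succ_of_ne_zero (Nat.ceil_pos.2 hy0).ne'
  have hny : (n : ℝ) ≤ y := by
    have := Nat.ceil_lt_add_one hy0.le
    rw [hn] at this; push_cast at this; linarith
  have hyn : y ≤ (n + 1 : ℕ) := hn ▸ Nat.le_ceil y
  have hNle := choose_add_one_le hd hny hdy'
  have hcard := card_monomials n d
  set N := (n + d).choose d + 1 with hNdef
  have hNr : (N : ℝ) ≤ (3 * Real.exp 1 * y / d) ^ d := by rw [hNdef]; push_cast; exact hNle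
  have hr : 2 * Δ * (3 * Real.exp 1 * y / d) = q / 40 := by
    rw [hΔ, ← hqq]; field_simp; norm_num
  obtain ⟨x, hx, hsep⟩ := exists_separated_in_ball (d := d) (δ := 2 * Δ) (r := q / 40)
    (by positivity) (by positivity) N (by
      rw [← hr, mul_pow (2 * Δ), mul_comm]; gcongr)
  obtain ⟨v, hv⟩ : ∃ v : EuclideanSpace ℝ (Fin d), ‖v‖ = Δ / 2 :=
    ⟨EuclideanSpace.single ⟨0, hd⟩ (Δ / 2), by simp [abs_of_pos hΔ0]⟩
  obtain ⟨s, hs, ⟨i₀, hi₀⟩, hmom⟩ := exists_matching_moments (n + 1) (by rw [hcard]) x v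
  have hsv : ∀ i, ‖s i • v‖ ≤ Δ / 2 := by
    intro i
    rw [norm_smul, Real.norm_eq_abs, hv]
    have := hs i
    nlinarith
  -- Perturbing two points at distance `2Δ` by `Δ/2` each leaves them at distance `Δ`.
  have hpert : ∀ i j, i ≠ j → ∀ a b : EuclideanSpace ℝ (Fin d), ‖a‖ ≤ Δ / 2 → ‖b‖ ≤ Δ / 2 →
      Δ ≤ ‖(x i + a) - (x j + b)‖ := by
    intro i j hij a b ha hb
    have h1 := hsep i j hij
    have h2 : ‖x i - x j‖ ≤ ‖(x i + a) - (x j + b)‖ + ‖a‖ + ‖b‖ := by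
      calc ‖x i - x j‖ = ‖((x i + a) - (x j + b)) - a + b‖ := by congr 1; abel
        _ ≤ _ := (norm_add_le _ _).trans (by gcongr; exact norm_sub_le _ _)
    linarith
  have hsv' : ∀ i, ‖-(s i • v)‖ ≤ Δ / 2 := fun i => by rw [norm_neg]; exact hsv i
  have hN0 : (0 : ℝ) < N := by positivity
  refine ⟨N, by omega, by exact_mod_cast hNr.trans hpow, fun i => x i + s i • v,
    fun i => x i - s i • v, ?_, ?_, ?_, ?_⟩
  · intro i j hij
    exact hpert i j hij _ _ (hsv i) (hsv j)
  · intro i j hij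
    simp only [sub_eq_add_neg (x _)]
    exact hpert i j hij _ _ (hsv' i) (hsv' j)
  · intro perm
    refine ⟨i₀, ?_⟩
    by_cases h : i₀ = perm i₀
    · rw [← h, show x i₀ + s i₀ • v - (x i₀ - s i₀ • v) = (2 * s i₀) • v by
        rw [mul_smul, two_smul]; abel, norm_smul, Real.norm_eq_abs, abs_mul, hi₀, hv]
      norm_num
      linarith
    · have := hpert i₀ (perm i₀) h _ _ (hsv i₀) (hsv' (perm i₀))
      rw [← sub_eq_add_neg (x _)] at this
      linarith
  · have hΔq : Δ / 2 ≤ q / 40 := by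
      have h1 : Δ ≤ d / q := by
        rw [hΔ]
        gcongr
        nlinarith
      have h2 : d / q ≤ q / 100 := by
        rw [div_le_iff₀ hq0]; nlinarith
      linarith
    have hTV := integral_abs_gauss_sum_le (κ := Fin N ⊕ Fin N)
      (Sum.elim (fun _ => 1 / (N : ℝ)) (fun _ => -(1 / (N : ℝ))))
      (Sum.elim (fun i => x i + s i • v) (fun i => x i - s i • v)) (n + 1)
      (R := q / 20) (l := 2 * Real.exp (-y)) (by positivity)
      (by
        simp only [Fintype.sum_sum_type, Sum.elim_inl, Sum.elim_inr, abs_neg, abs_div, abs_one,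
          Nat.abs_cast, Finset.sum_const, Finset.card_univ, Fintype.card_fin, nsmul_eq_mul]
        rw [mul_one_div_cancel hN0.ne']
        norm_num)
      (by
        rintro (i | i)
        · exact (norm_add_le _ _).trans (by linarith [hx i, hsv i])
        · exact (norm_sub_le _ _).trans (by linarith [hx i, hsv i]))
      (by
        intro b j hj
        simp only [Fintype.sum_sum_type, Sum.elim_inl, Sum.elim_inr, ← Finset.mul_sum,
          hmom b j hj]
        ring)
      (by
        rw [show 400 * (q / 20) ^ 2 = y by rw [← hqq]; ring]
        exact tail_le hyn)
    simp only [Fintype.sum_sum_type, Sum.elim_inl, Sum.elim_inr, ← Finset.mul_sum, neg_mul,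
      Finset.sum_neg_distrib, ← sub_eq_add_neg, gaussDensity] at hTV
    simp only [← Finset.mul_sum]
    linarith [Real.exp_pos (-y)]
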